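/- Let n ≥ 4, N = (n-1)(n+2)/2, k₁ = ⌊(n+2)/4⌋, and let λ_1 ≤ λ_2 ≤ ... ≤ λ_N be the eigenvalues of a symmetric operator R̊ on the trace-free symmetric 2-tensors of an n-dimensional Euclidean vector space such that ∑_{α=1}^{k₁} λ_α ≥ 0 (k₁-nonnegativity). Then for any algebraic Weyl tensor W, ∑_α λ_α |S^α W|² ≥ 0, where {S^α} is an orthonormal eigenbasis of R̊. -/

import Mathlib

open Finset

/-- The derivation action of a symmetric 2-tensor `S` on a 4-tensor `W`. -/
def tensorAct (n : ℕ) (S : Fin n → Fin n → ℝ)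
    (W : Fin n → Fin n → Fin n → Fin n → ℝ) (i j k l : Fin n) : ℝ :=
  ∑ m, (S i m * W m j k l + S j m * W i m k l + S k m * W i j m l + S l m * W i j k m)

/-- A weighted sum with nondecreasing weights `lam` whose `k` smallest add up to something
nonnegative is nonnegative, if the coefficients lie in `[0, C]` and have sum at least `k * C`. -/
theorem sum_mul_nonneg_of_partial_sum_nonneg {N k : ℕ} (hk : 0 < k) (hkN : k ≤ N)
    {lam a : Fin N → ℝ} {C : ℝ} (hmono : Monotone lam)
    (hknn : 0 ≤ ∑ α ∈ univ.filter (fun α : Fin N => (α : ℕ) < k), lam α)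
    (ha : ∀ α, 0 ≤ a α) (haC : ∀ α, a α ≤ C) (hsum : k * C ≤ ∑ α, a α) :
    0 ≤ ∑ α, lam α * a α := by
  set μ : ℝ := lam ⟨k - 1, by omega⟩ with hμ
  have hC : 0 ≤ C := (ha ⟨0, by omega⟩).trans (haC _)
  have hcard : (univ.filter (fun α : Fin N => (α : ℕ) < k)).card = k := by
    rw [Fin.card_filter_val_lt, min_eq_right hkN]
  have hlow : ∀ α : Fin N, (α : ℕ) < k → lam α ≤ μ := fun α h =>
    hmono (Fin.le_def.2 (show (α : ℕ) ≤ k - 1 by omega))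
  have hhigh : ∀ α : Fin N, ¬ (α : ℕ) < k → μ ≤ lam α := fun α h =>
    hmono (Fin.le_def.2 (show k - 1 ≤ (α : ℕ) by omega))
  have hμk : ∑ α ∈ univ.filter (fun α : Fin N => (α : ℕ) < k), lam α ≤ k * μ := by
    have h := Finset.sum_le_card_nsmul (univ.filter (fun α : Fin N => (α : ℕ) < k)) lam μ
      (fun α hα => hlow α (Finset.mem_filter.1 hα).2)
    rwa [hcard, nsmul_eq_mul] at h
  have hk' : (0 : ℝ) < k := Nat.cast_pos.2 hk
  have hμ0 : 0 ≤ μ := nonneg_of_mul_nonneg_right (hknn.trans hμk) hk'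
  have hterm : ∑ α : Fin N, (if (α : ℕ) < k then (lam α - μ) * C else 0)
      ≤ ∑ α, (lam α - μ) * a α := by
    refine Finset.sum_le_sum fun α _ => ?_
    split_ifs with h
    · exact mul_le_mul_of_nonpos_left (haC α) (sub_nonpos.2 (hlow α h))
    · exact mul_nonneg (sub_nonneg.2 (hhigh α h)) (ha α)
  rw [← Finset.sum_filter, ← Finset.sum_mul, Finset.sum_sub_distrib, Finset.sum_const, hcard,
    nsmul_eq_mul] at hterm
  have hsplit : ∑ α, (lam α - μ) * a α = ∑ α, lam α * a α - μ * ∑ α, a α := by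
    rw [Finset.mul_sum, ← Finset.sum_sub_distrib]
    exact Finset.sum_congr rfl fun α _ => by ring
  nlinarith [mul_nonneg hknn hC, mul_le_mul_of_nonneg_left hsum hμ0]

/-- For a vector of sum zero, the sum of two distinct entries is controlled by the norm. -/
theorem sq_add_le_of_sum_eq_zero {n : ℕ} (hn : 2 < n) (s : Fin n → ℝ) (hs : ∑ i, s i = 0)
    {i j : Fin n} (hij : i ≠ j) :
    n * (s i + s j) ^ 2 ≤ 2 * (n - 2) * ∑ i, s i ^ 2 := by
  have hsplit : ∀ f : Fin n → ℝ, ∑ m, f m = f i + f j + ∑ m ∈ univ \ {i, j}, f m := by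
    intro f
    rw [← Finset.sum_sdiff (Finset.subset_univ {i, j}), Finset.sum_pair hij, add_comm]
  have hcard : ((univ \ {i, j} : Finset (Fin n)).card : ℝ) = n - 2 := by
    rw [Finset.card_sdiff_of_subset (Finset.subset_univ _), Finset.card_pair hij,
      Finset.card_univ, Fintype.card_fin, Nat.cast_sub hn.le]
    norm_num
  have hcs := sq_sum_le_card_mul_sum_sq (s := univ \ {i, j}) (f := s)
  rw [hcard] at hcs
  rw [hsplit] at hs
  rw [hsplit fun m => s m ^ 2]
  have hr : ∑ m ∈ univ \ {i, j}, s m = -(s i + s j) := by linarith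
  rw [hr] at hcs
  have hn' : (2 : ℝ) < n := by exact_mod_cast hn
  nlinarith [mul_nonneg (sub_nonneg.2 hn'.le) (sq_nonneg (s i - s j))]

theorem Matrix.sum_sq_eq_trace {n : ℕ} (A : Matrix (Fin n) (Fin n) ℝ) :
    ∑ i, ∑ j, A i j ^ 2 = (A * A.transpose).trace := by
  simp [Matrix.trace, Matrix.mul_apply, sq]

theorem Matrix.sum_sq_conj {n : ℕ} (U A : Matrix (Fin n) (Fin n) ℝ)
    (hU : U.transpose * U = 1) :
    ∑ i, ∑ j, (U * A * U.transpose) i j ^ 2 = ∑ i, ∑ j, A i j ^ 2 := by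
  rw [Matrix.sum_sq_eq_trace, Matrix.sum_sq_eq_trace]
  have h : U * A * U.transpose * (U * A * U.transpose).transpose
      = U * (A * A.transpose) * U.transpose := by
    simp only [Matrix.transpose_mul, Matrix.transpose_transpose]
    calc U * A * U.transpose * (U * (A.transpose * U.transpose))
        = U * A * (U.transpose * U) * (A.transpose * U.transpose) := by
          simp only [Matrix.mul_assoc]
      _ = _ := by rw [hU]; simp only [Matrix.mul_assoc, Matrix.mul_one]
  rw [h, Matrix.trace_mul_comm, ← Matrix.mul_assoc, hU, Matrix.one_mul]

/-- The anticommutator of a trace-free symmetric matrix with a skew matrix is bounded by the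
largest sum of two distinct eigenvalues. -/
theorem Matrix.sum_sq_anticomm_le {n : ℕ} (hn : 2 < n) (S A : Matrix (Fin n) (Fin n) ℝ)
    (hS : S.transpose = S) (hS0 : S.trace = 0) (hA : A.transpose = -A) :
    n * ∑ i, ∑ j, (S * A + A * S) i j ^ 2
      ≤ 2 * (n - 2) * (∑ i, ∑ j, S i j ^ 2) * ∑ i, ∑ j, A i j ^ 2 := by
  have hH : S.IsHermitian := by
    rw [Matrix.IsHermitian, Matrix.conjTranspose_eq_transpose_of_trivial, hS]
  obtain ⟨U, s, hU, hU', hSU⟩ : ∃ (U : Matrix (Fin n) (Fin n) ℝ) (s : Fin n → ℝ),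
      U.transpose * U = 1 ∧ U * U.transpose = 1 ∧ S = U * Matrix.diagonal s * U.transpose := by
    refine ⟨hH.eigenvectorUnitary, hH.eigenvalues, ?_, ?_, ?_⟩
    · simpa [Matrix.star_eq_conjTranspose, Matrix.conjTranspose_eq_transpose_of_trivial] using
        Unitary.coe_star_mul_self hH.eigenvectorUnitary
    · simpa [Matrix.star_eq_conjTranspose, Matrix.conjTranspose_eq_transpose_of_trivial] using
        Unitary.coe_mul_star_self hH.eigenvectorUnitary
    · have h := hH.spectral_theorem
      rw [Unitary.conjStarAlgAut_apply] at h
      simpa [Matrix.star_eq_conjTranspose, Matrix.conjTranspose_eq_transpose_of_trivial,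
        Function.comp_def] using h
  set B := U.transpose * A * U with hB
  have hAB : A = U * B * U.transpose := by
    rw [hB]
    calc A = (U * U.transpose) * A * (U * U.transpose) := by rw [hU']; simp
      _ = _ := by simp only [Matrix.mul_assoc]
  have hBskew : B.transpose = -B := by
    rw [hB]
    simp [Matrix.transpose_mul, hA, Matrix.mul_assoc]
  have hs : ∑ i, s i = 0 := by
    rw [hSU, Matrix.trace_mul_comm, ← Matrix.mul_assoc, hU, Matrix.one_mul,
      Matrix.trace_diagonal] at hS0
    exact hS0
  have hcomm : S * A + A * S
      = U * (Matrix.diagonal s * B + B * Matrix.diagonal s) * U.transpose := by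
    have key : ∀ P Q : Matrix (Fin n) (Fin n) ℝ,
        U * P * U.transpose * (U * Q * U.transpose) = U * (P * Q) * U.transpose := by
      intro P Q
      calc U * P * U.transpose * (U * Q * U.transpose)
          = U * P * (U.transpose * U) * (Q * U.transpose) := by simp only [Matrix.mul_assoc]
        _ = _ := by rw [hU]; simp only [Matrix.mul_assoc, Matrix.mul_one]
    rw [hSU, hAB, key, key, Matrix.mul_add, Matrix.add_mul]
  have hSs : ∑ i, ∑ j, S i j ^ 2 = ∑ i, s i ^ 2 := by
    rw [hSU, Matrix.sum_sq_conj U _ hU]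
    refine Finset.sum_congr rfl fun i _ => ?_
    simp [Matrix.diagonal_apply, ite_pow]
  rw [hcomm, Matrix.sum_sq_conj U _ hU, hSs, hAB, Matrix.sum_sq_conj U _ hU]
  simp only [Finset.mul_sum]
  refine Finset.sum_le_sum fun i _ => Finset.sum_le_sum fun j _ => ?_
  rw [Matrix.add_apply, Matrix.diagonal_mul, Matrix.mul_diagonal]
  by_cases hij : i = j
  · subst hij
    have h0 : B i i = 0 := by
      have h := congrFun (congrFun hBskew i) i
      rw [Matrix.transpose_apply, Matrix.neg_apply] at h
      linarith
    simp [h0]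
  · have h := mul_le_mul_of_nonneg_right (sq_add_le_of_sum_eq_zero hn s hs hij)
      (sq_nonneg (B i j))
    rw [Finset.mul_sum] at h
    nlinarith [h]

/-- The action of `S` on the first index of `W`. -/
def tensorActFst (n : ℕ) (S : Fin n → Fin n → ℝ)
    (W : Fin n → Fin n → Fin n → Fin n → ℝ) (i j k l : Fin n) : ℝ :=
  ∑ m, S i m * W m j k l

/-- Exchanging the two pairs of indices in a fourfold sum. -/
theorem sum_swap_pairs {n : ℕ} (f : Fin n → Fin n → Fin n → Fin n → ℝ) :
    ∑ i, ∑ j, ∑ k, ∑ l, f k l i j = ∑ i, ∑ j, ∑ k, ∑ l, f i j k l := by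
  simp only [← Fintype.sum_prod_type' (f := fun i j => ∑ k, ∑ l, f k l i j),
    ← Fintype.sum_prod_type' (f := fun i j => ∑ k, ∑ l, f i j k l)]
  simp only [← Fintype.sum_prod_type' (f := fun k l => f k l _ _),
    ← Fintype.sum_prod_type' (f := fun k l => f _ _ k l)]
  exact Finset.sum_comm

/-- Exchanging the first two indices in a fourfold sum. -/
theorem sum_swap_fst {n : ℕ} (f : Fin n → Fin n → Fin n → Fin n → ℝ) :
    ∑ i, ∑ j, ∑ k, ∑ l, f j i k l = ∑ i, ∑ j, ∑ k, ∑ l, f i j k l :=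
  Finset.sum_comm

/-- Exchanging the last two indices in a fourfold sum. -/
theorem sum_swap_snd {n : ℕ} (f : Fin n → Fin n → Fin n → Fin n → ℝ) :
    ∑ i, ∑ j, ∑ k, ∑ l, f i j l k = ∑ i, ∑ j, ∑ k, ∑ l, f i j k l :=
  Finset.sum_congr rfl fun _ _ => Finset.sum_congr rfl fun _ _ => Finset.sum_comm

section Weyl

variable {n : ℕ} {W : Fin n → Fin n → Fin n → Fin n → ℝ}

theorem tensorAct_eq (S : Fin n → Fin n → ℝ)
    (hWa : ∀ i j k l, W i j k l = - W j i k l)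
    (hWc : ∀ i j k l, W i j k l = W k l i j) (i j k l : Fin n) :
    tensorAct n S W i j k l =
      (tensorActFst n S W i j k l - tensorActFst n S W j i k l) +
      (tensorActFst n S W k l i j - tensorActFst n S W l k i j) := by
  simp only [tensorAct, tensorActFst, ← Finset.sum_sub_distrib, ← Finset.sum_add_distrib]
  refine Finset.sum_congr rfl fun m _ => ?_
  rw [hWa i m k l, hWc i j m l, hWc i j k m, hWa k m i j]
  ring

theorem sum_sq_tensorActFst_skew_le (hn : 2 < n) (S : Fin n → Fin n → ℝ)
    (hS : ∀ i j, S i j = S j i) (hS0 : ∑ i, S i i = 0) (hS1 : ∑ i, ∑ j, S i j ^ 2 = 1)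
    (hWa : ∀ i j k l, W i j k l = - W j i k l) :
    n * ∑ i, ∑ j, ∑ k, ∑ l, (tensorActFst n S W i j k l - tensorActFst n S W j i k l) ^ 2
      ≤ 2 * (n - 2) * ∑ i, ∑ j, ∑ k, ∑ l, W i j k l ^ 2 := by
  rw [← sum_swap_pairs, ← sum_swap_pairs (fun i j k l => W i j k l ^ 2)]
  rw [Finset.mul_sum, Finset.mul_sum]
  refine Finset.sum_le_sum fun k _ => ?_
  rw [Finset.mul_sum, Finset.mul_sum]
  refine Finset.sum_le_sum fun l _ => ?_
  have h := Matrix.sum_sq_anticomm_le hn (Matrix.of S) (Matrix.of fun i j => W i j k l)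
    (by ext i j; exact hS j i) hS0 (by ext i j; exact hWa j i k l)
  simp only [Matrix.of_apply, hS1, mul_one] at h
  refine le_trans (le_of_eq ?_) h
  congr 1
  refine Finset.sum_congr rfl fun i _ => Finset.sum_congr rfl fun j _ => ?_
  congr 1
  simp only [tensorActFst, Matrix.add_apply, Matrix.mul_apply, Matrix.of_apply,
    ← Finset.sum_sub_distrib, ← Finset.sum_add_distrib]
  refine Finset.sum_congr rfl fun m _ => ?_
  rw [hWa i m k l, hS m j]
  ring

theorem sum_sq_tensorAct_le (hn : 2 < n) (S : Fin n → Fin n → ℝ)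
    (hS : ∀ i j, S i j = S j i) (hS0 : ∑ i, S i i = 0) (hS1 : ∑ i, ∑ j, S i j ^ 2 = 1)
    (hWa : ∀ i j k l, W i j k l = - W j i k l)
    (hWc : ∀ i j k l, W i j k l = W k l i j) :
    n * ∑ i, ∑ j, ∑ k, ∑ l, tensorAct n S W i j k l ^ 2
      ≤ 8 * (n - 2) * ∑ i, ∑ j, ∑ k, ∑ l, W i j k l ^ 2 := by
  have h := sum_sq_tensorActFst_skew_le hn S hS hS0 hS1 hWa
  set X : Fin n → Fin n → Fin n → Fin n → ℝ := fun i j k l =>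
    tensorActFst n S W i j k l - tensorActFst n S W j i k l
  have hle : ∑ i, ∑ j, ∑ k, ∑ l, tensorAct n S W i j k l ^ 2
      ≤ ∑ i, ∑ j, ∑ k, ∑ l, (2 * X i j k l ^ 2 + 2 * X k l i j ^ 2) := by
    refine Finset.sum_le_sum fun i _ => Finset.sum_le_sum fun j _ =>
      Finset.sum_le_sum fun k _ => Finset.sum_le_sum fun l _ => ?_
    rw [tensorAct_eq S hWa hWc]
    change (X i j k l + X k l i j) ^ 2 ≤ _
    nlinarith [sq_nonneg (X i j k l - X k l i j)]
  have hsw := sum_swap_pairs (fun i j k l => X i j k l ^ 2)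
  simp only [Finset.sum_add_distrib, ← Finset.mul_sum] at hle
  rw [hsw] at hle
  change n * ∑ i, ∑ j, ∑ k, ∑ l, X i j k l ^ 2 ≤ _ at h
  have := mul_le_mul_of_nonneg_left hle (Nat.cast_nonneg (α := ℝ) n)
  linarith

theorem sum_sq_tensorAct_eq (S : Fin n → Fin n → ℝ)
    (hWa : ∀ i j k l, W i j k l = - W j i k l)
    (hWb : ∀ i j k l, W i j k l = - W i j l k)
    (hWc : ∀ i j k l, W i j k l = W k l i j) :
    ∑ i, ∑ j, ∑ k, ∑ l, tensorAct n S W i j k l ^ 2 =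
      4 * ∑ i, ∑ j, ∑ k, ∑ l, tensorActFst n S W i j k l * tensorActFst n S W i j k l
      - 4 * ∑ i, ∑ j, ∑ k, ∑ l, tensorActFst n S W i j k l * tensorActFst n S W j i k l
      + 8 * ∑ i, ∑ j, ∑ k, ∑ l, tensorActFst n S W i j k l * tensorActFst n S W k l i j := by
  set T := tensorActFst n S W with hT
  have hTb : ∀ i j k l, T i j l k = - T i j k l := by
    intro i j k l
    simp only [hT, tensorActFst, ← Finset.sum_neg_distrib]
    exact Finset.sum_congr rfl fun m _ => by rw [hWb]; ring
  have hexp : ∀ i j k l, tensorAct n S W i j k l ^ 2 =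
      (T i j k l * T i j k l + T j i k l * T j i k l
        + T k l i j * T k l i j + T l k i j * T l k i j)
      - 2 * (T i j k l * T j i k l) - 2 * (T k l i j * T l k i j)
      + 2 * (T i j k l * T k l i j) + 2 * (T j i k l * T k l j i)
      + 2 * (T i j l k * T l k i j) + 2 * (T j i l k * T l k j i) := by
    intro i j k l
    rw [tensorAct_eq S hWa hWc, ← hT, hTb k l i j, hTb i j k l, hTb j i k l, hTb l k i j]
    ring
  simp only [hexp, Finset.sum_add_distrib, Finset.sum_sub_distrib, ← Finset.mul_sum]
  have e1 := sum_swap_fst fun i j k l => T i j k l * T i j k l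
  have e2 := sum_swap_pairs fun i j k l => T i j k l * T i j k l
  have e3 := sum_swap_pairs fun i j k l => T j i k l * T j i k l
  have e4 := sum_swap_pairs fun i j k l => T i j k l * T j i k l
  have e5 := sum_swap_fst fun i j k l => T i j k l * T k l i j
  have e6 := sum_swap_snd fun i j k l => T i j k l * T k l i j
  have e7 := sum_swap_snd fun i j k l => T j i k l * T k l j i
  linarith

theorem sum_mul_bianchi
    (hWa : ∀ i j k l, W i j k l = - W j i k l)
    (hWbianchi : ∀ i j k l, W i j k l + W j k i l + W k i j l = 0) :
    2 * ∑ i, ∑ j, ∑ k, ∑ l, W i j k l * W k j i l = ∑ i, ∑ j, ∑ k, ∑ l, W i j k l ^ 2 := by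
  have e := sum_swap_fst fun i j k l => W i j k l * W k j i l
  have h : ∀ i j k l, W i j k l ^ 2 = W i j k l * W k j i l + W j i k l * W k i j l := by
    intro i j k l
    have hb := hWbianchi i j k l
    rw [hWa j k i l] at hb
    rw [hWa j i k l]
    linear_combination W i j k l * hb
  simp only [h, Finset.sum_add_distrib]
  linarith

end Weyl

section Basis

variable {n N : ℕ} {S : Fin N → Fin n → Fin n → ℝ}

/-- The projector onto trace-free symmetric tensors, in terms of an orthonormal basis. -/
theorem sum_basis_mul_basis (hn : 0 < n)
    (hSsymm : ∀ α i j, S α i j = S α j i) (hStrace : ∀ α, ∑ i, S α i i = 0)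
    (hScomplete : ∀ T : Fin n → Fin n → ℝ, (∀ i j, T i j = T j i) → (∑ i, T i i = 0) →
      ∀ i j, T i j = ∑ α, (∑ k, ∑ l, T k l * S α k l) * S α i j) (a m b p : Fin n) :
    ∑ α, S α a m * S α b p = (1 / 2) * ((if a = b then 1 else 0) * (if m = p then 1 else 0)
      + (if a = p then 1 else 0) * (if m = b then 1 else 0))
      - (1 / n) * ((if a = m then 1 else 0) * (if b = p then 1 else 0)) := by
  have hn' : (n : ℝ) ≠ 0 := Nat.cast_ne_zero.2 hn.ne'
  have h := hScomplete (fun i j => (1 / 2) * ((if a = i then 1 else 0) * (if m = j then 1 else 0)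
      + (if a = j then 1 else 0) * (if m = i then 1 else 0))
      - (1 / n) * ((if a = m then 1 else 0) * (if i = j then 1 else 0)))
    (fun i j => by simp only [eq_comm (a := j) (b := i)]; ring)
    (by
      simp only [Finset.sum_sub_distrib, ← Finset.mul_sum, Finset.sum_add_distrib, mul_ite,
        mul_one, mul_zero, Finset.sum_ite_eq, Finset.mem_univ, if_true]
      by_cases ham : a = m
      · subst ham; simp; field_simp; norm_num
      · simp [ham]) b p
  rw [h]
  refine Finset.sum_congr rfl fun α _ => ?_
  congr 1
  have h1 : ∀ k l, ((1 / 2) * ((if a = k then 1 else 0) * (if m = l then 1 else 0)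
      + (if a = l then 1 else 0) * (if m = k then 1 else 0))
      - (1 / n) * ((if a = m then 1 else 0) * (if k = l then 1 else 0))) * S α k l
      = (1 / 2) * (if a = k then (if m = l then S α k l else 0) else 0)
      + (1 / 2) * (if m = k then (if a = l then S α k l else 0) else 0)
      - (1 / n) * (if a = m then 1 else 0) * (if k = l then S α k l else 0) := by
    intro k l
    split_ifs <;> ring
  simp only [h1, Finset.sum_sub_distrib, Finset.sum_add_distrib, ← Finset.mul_sum]
  simp only [Finset.sum_ite_irrel, Finset.sum_const_zero, Finset.sum_ite_eq, Finset.mem_univ,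
    if_true, hStrace, hSsymm α m a]
  ring

theorem sum_basis_contract (hn : 0 < n)
    (hSsymm : ∀ α i j, S α i j = S α j i) (hStrace : ∀ α, ∑ i, S α i i = 0)
    (hScomplete : ∀ T : Fin n → Fin n → ℝ, (∀ i j, T i j = T j i) → (∑ i, T i i = 0) →
      ∀ i j, T i j = ∑ α, (∑ k, ∑ l, T k l * S α k l) * S α i j)
    (a b : Fin n) (F G : Fin n → ℝ) :
    ∑ α, (∑ m, S α a m * F m) * (∑ p, S α b p * G p) =
      (1 / 2) * ((if a = b then ∑ m, F m * G m else 0) + F b * G a) - (1 / n) * (F a * G b) := by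
  have h : ∑ α, (∑ m, S α a m * F m) * (∑ p, S α b p * G p)
      = ∑ m, ∑ p, (∑ α, S α a m * S α b p) * (F m * G p) := by
    simp only [Finset.sum_mul_sum]
    rw [Finset.sum_comm]
    refine Finset.sum_congr rfl fun m _ => ?_
    rw [Finset.sum_comm]
    refine Finset.sum_congr rfl fun p _ => ?_
    rw [Finset.sum_mul]
    exact Finset.sum_congr rfl fun α _ => by ring
  rw [h]
  have h1 : ∀ m p, (∑ α, S α a m * S α b p) * (F m * G p)
      = (1 / 2) * (if a = b then (if m = p then F m * G p else 0) else 0)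
      + (1 / 2) * (if b = m then (if a = p then F m * G p else 0) else 0)
      - (1 / n) * (if a = m then (if b = p then F m * G p else 0) else 0) := by
    intro m p
    rw [sum_basis_mul_basis hn hSsymm hStrace hScomplete]
    simp only [eq_comm (a := b) (b := m)]
    split_ifs <;> ring
  simp only [h1, Finset.sum_sub_distrib, Finset.sum_add_distrib, ← Finset.mul_sum]
  simp only [Finset.sum_ite_irrel, Finset.sum_const_zero, Finset.sum_ite_eq, Finset.mem_univ,
    if_true]
  ring

theorem sum_comm_three (f : Fin N → Fin n → Fin n → Fin n → ℝ) :
    ∑ α, ∑ j, ∑ k, ∑ l, f α j k l = ∑ j, ∑ k, ∑ l, ∑ α, f α j k l := by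
  rw [Finset.sum_comm]
  refine Finset.sum_congr rfl fun j _ => ?_
  rw [Finset.sum_comm]
  exact Finset.sum_congr rfl fun k _ => Finset.sum_comm

theorem sum_comm_four (f : Fin N → Fin n → Fin n → Fin n → Fin n → ℝ) :
    ∑ α, ∑ i, ∑ j, ∑ k, ∑ l, f α i j k l = ∑ i, ∑ j, ∑ k, ∑ l, ∑ α, f α i j k l := by
  rw [Finset.sum_comm]
  exact Finset.sum_congr rfl fun i _ => sum_comm_three fun α => f α i

theorem sum_basis_sum_sq_tensorAct (hn : 0 < n)
    (hSsymm : ∀ α i j, S α i j = S α j i) (hStrace : ∀ α, ∑ i, S α i i = 0)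
    (hScomplete : ∀ T : Fin n → Fin n → ℝ, (∀ i j, T i j = T j i) → (∑ i, T i i = 0) →
      ∀ i j, T i j = ∑ α, (∑ k, ∑ l, T k l * S α k l) * S α i j)
    {W : Fin n → Fin n → Fin n → Fin n → ℝ}
    (hWa : ∀ i j k l, W i j k l = - W j i k l)
    (hWb : ∀ i j k l, W i j k l = - W i j l k)
    (hWc : ∀ i j k l, W i j k l = W k l i j)
    (hWbianchi : ∀ i j k l, W i j k l + W j k i l + W k i j l = 0)
    (hWtrace : ∀ k l, ∑ i, W i k i l = 0) :
    n * ∑ α, ∑ i, ∑ j, ∑ k, ∑ l, tensorAct n (S α) W i j k l ^ 2 =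
      2 * (n ^ 2 + n - 8) * ∑ i, ∑ j, ∑ k, ∑ l, W i j k l ^ 2 := by
  have hn' : (n : ℝ) ≠ 0 := Nat.cast_ne_zero.2 hn.ne'
  have hc := sum_basis_contract hn hSsymm hStrace hScomplete
  set w := ∑ i, ∑ j, ∑ k, ∑ l, W i j k l ^ 2 with hw
  have hsame : ∑ α, ∑ i, ∑ j, ∑ k, ∑ l,
      tensorActFst n (S α) W i j k l * tensorActFst n (S α) W i j k l
      = (1 / 2) * (n * w + w) - (1 / n) * w := by
    rw [sum_comm_four]
    simp only [tensorActFst, hc, if_true, Finset.sum_sub_distrib, Finset.sum_add_distrib,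
      ← Finset.mul_sum]
    simp only [← sq]
    rw [Finset.sum_const, Finset.card_univ, Fintype.card_fin, nsmul_eq_mul,
      ← sum_comm_three fun i j k l => W i j k l ^ 2]
  have hadj : ∑ α, ∑ i, ∑ j, ∑ k, ∑ l,
      tensorActFst n (S α) W i j k l * tensorActFst n (S α) W j i k l
      = (1 / 2) * w + (1 / n) * w := by
    have hd : ∀ i k l, W i i k l = 0 := fun i k l => by linarith [hWa i i k l]
    have hs : ∀ i j k l, W i j k l * W j i k l = - W i j k l ^ 2 := fun i j k l => by
      rw [hWa j i k l]; ring
    rw [sum_comm_four]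
    simp only [tensorActFst, hc, hd, hs, zero_mul, add_zero, Finset.sum_sub_distrib,
      ← Finset.mul_sum, Finset.sum_neg_distrib]
    simp only [Finset.sum_ite_irrel, Finset.sum_const_zero, Finset.sum_ite_eq, Finset.mem_univ,
      if_true, ← sq]
    rw [← sum_comm_three fun i j k l => W i j k l ^ 2]
    ring
  have hopp : ∑ α, ∑ i, ∑ j, ∑ k, ∑ l,
      tensorActFst n (S α) W i j k l * tensorActFst n (S α) W k l i j
      = (1 / 4) * w - (1 / n) * w := by
    have htr : ∑ i, ∑ j, ∑ k, ∑ l, W k j k l * W i l i j = 0 := by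
      rw [← sum_swap_snd]
      simp only [← Finset.sum_mul, hWtrace, zero_mul, Finset.sum_const_zero]
    have hB := sum_mul_bianchi hWa hWbianchi
    rw [← sum_swap_snd, ← hw] at hB
    have hs : ∀ i j k l, W i j k l * W k l i j = W i j k l ^ 2 := fun i j k l => by
      rw [hWc k l i j]; ring
    have hB' : ∀ i j l m, W m j i l * W m l i j = W i j m l * W m j i l := fun i j l m => by
      rw [hWc m l i j]; ring
    rw [sum_comm_four]
    simp only [tensorActFst, hc, hs, Finset.sum_sub_distrib, Finset.sum_add_distrib,
      ← Finset.mul_sum, htr]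
    simp only [Finset.sum_ite_irrel, Finset.sum_const_zero, Finset.sum_ite_eq, Finset.mem_univ,
      if_true, hB']
    rw [← hw]
    linarith
  simp only [sum_sq_tensorAct_eq _ hWa hWb hWc, Finset.sum_add_distrib, Finset.sum_sub_distrib,
    ← Finset.mul_sum]
  rw [hsame, hadj, hopp]
  field_simp
  ring

end Basis

theorem weighted_act_weyl_sq_nonneg
    (n N : ℕ) (hn : 4 ≤ n) (hN : 2 * N = (n - 1) * (n + 2))
    (k₁ : ℕ) (hk₁ : k₁ = (n + 2) / 4)
    (lam : Fin N → ℝ) (hmono : ∀ α β : Fin N, α ≤ β → lam α ≤ lam β)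
    (hknn : 0 ≤ ∑ α ∈ Finset.univ.filter (fun α : Fin N => (α : ℕ) < k₁), lam α)
    (S : Fin N → Fin n → Fin n → ℝ)
    (hSsymm : ∀ α i j, S α i j = S α j i)
    (hStrace : ∀ α, ∑ i, S α i i = 0)
    (hSortho : ∀ α β, (∑ i, ∑ j, S α i j * S β i j) = if α = β then 1 else 0)
    (hScomplete : ∀ T : Fin n → Fin n → ℝ, (∀ i j, T i j = T j i) → (∑ i, T i i = 0) →
      ∀ i j, T i j = ∑ α, (∑ k, ∑ l, T k l * S α k l) * S α i j)
    (W : Fin n → Fin n → Fin n → Fin n → ℝ)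
    (hWa : ∀ i j k l, W i j k l = - W j i k l)
    (hWb : ∀ i j k l, W i j k l = - W i j l k)
    (hWc : ∀ i j k l, W i j k l = W k l i j)
    (hWbianchi : ∀ i j k l, W i j k l + W j k i l + W k i j l = 0)
    (hWtrace : ∀ k l, ∑ i, W i k i l = 0) :
    0 ≤ ∑ α, lam α * (∑ i, ∑ j, ∑ k, ∑ l, (tensorAct n (S α) W i j k l) ^ 2) := by
  have hn' : (4 : ℝ) ≤ n := by exact_mod_cast hn
  set w := ∑ i, ∑ j, ∑ k, ∑ l, W i j k l ^ 2 with hw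
  have hw0 : 0 ≤ w := Finset.sum_nonneg fun i _ => Finset.sum_nonneg fun j _ =>
    Finset.sum_nonneg fun k _ => Finset.sum_nonneg fun l _ => sq_nonneg _
  have hk4 : (4 * k₁ : ℝ) ≤ n + 2 := by
    have : 4 * k₁ ≤ n + 2 := by omega
    exact_mod_cast this
  have hkN : k₁ ≤ N := by
    have h3 : 3 * (n + 2) ≤ (n - 1) * (n + 2) := Nat.mul_le_mul_right _ (by omega)
    omega
  refine sum_mul_nonneg_of_partial_sum_nonneg (k := k₁) (C := 8 * (n - 2) * w / n)
    (by omega) hkN hmono hknn ?_ ?_ ?_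
  · exact fun α => Finset.sum_nonneg fun i _ => Finset.sum_nonneg fun j _ =>
      Finset.sum_nonneg fun k _ => Finset.sum_nonneg fun l _ => sq_nonneg _
  · intro α
    rw [le_div_iff₀ (by linarith), mul_comm]
    exact sum_sq_tensorAct_le (by omega) (S α) (hSsymm α) (hStrace α)
      (by simpa [sq] using hSortho α α) hWa hWc
  · have h := sum_basis_sum_sq_tensorAct (by omega) hSsymm hStrace hScomplete
      hWa hWb hWc hWbianchi hWtrace
    rw [← mul_div_assoc, div_le_iff₀ (by linarith), mul_comm (∑ α, _), h]
    have hcoef : (k₁ : ℝ) * (8 * (n - 2)) ≤ 2 * (n ^ 2 + n - 8) := by nlinarith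
    nlinarith [mul_le_mul_of_nonneg_right hcoef hw0]
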